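/- arXiv:1309.3526 — 7 statements merged into one kernel-verified Lean document; each statement's English description precedes it below -/
import Mathlib

section
/- Let A be a unital C*-algebra. For all a, b, c, d in A and every φ in the dual A*, the Jordan identity holds with the functional in the last slot: {a,b,{c,d,φ}} = {{a,b,c},d,φ} - {c,{b,a,d},φ} + {c,d,{a,b,φ}} (an equality of functionals on A). -/
noncomputable section

variable {A : Type*} [NormedRing A] [StarRing A] [CStarRing A]
  [NormedAlgebra ℂ A] [CompleteSpace A] [StarModule ℂ A]

/-- The triple product `{a,b,c} = (a b* c + c b* a)/2` on a C*-algebra. -/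
def tp (a b c : A) : A := (2 : ℂ)⁻¹ • (a * star b * c + c * star b * a)

/-- The module triple product `{a,b,φ} = {φ,b,a}`, given by `x ↦ φ({b,a,x})`. -/
def tOut (a b : A) (φ : A → ℂ) : A → ℂ := fun x => φ (tp b a x)

/-- The module triple product `{a,φ,b}`, given by `x ↦ conj (φ ({a,x,b}))`. -/
def tMid (a : A) (φ : A → ℂ) (b : A) : A → ℂ := fun x => starRingEnd ℂ (φ (tp a x b))

/-- The adjoint functional `φ*(x) = conj (φ (x*))`. -/
def fstar (φ : A → ℂ) : A → ℂ := fun x => starRingEnd ℂ (φ (star x))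

/-- The module action `a·φ : x ↦ φ(x a)`. -/
def actL (a : A) (φ : A → ℂ) : A → ℂ := fun x => φ (x * a)

/-- The module action `φ·a : x ↦ φ(a x)`. -/
def actR (φ : A → ℂ) (a : A) : A → ℂ := fun x => φ (a * x)

/-- The commutator `[φ,a] = φ·a - a·φ : x ↦ φ(a x - x a)`. -/
def fcomm (φ : A → ℂ) (a : A) : A → ℂ := fun x => φ (a * x - x * a)

/-- The inner binary derivation `D_ψ(x) = ψ·x - x·ψ`, so `D_ψ(x)(y) = ψ(x y - y x)`. -/
def Dd (ψ : A → ℂ) (x : A) : A → ℂ := fun y => ψ (x * y - y * x)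

/-!
The operator `{a,b,·}` is half the sum of left multiplication by `a b*` and right multiplication
by `b* a`. Left and right multiplications commute, so `[{a,b,·}, {c,d,·}]` is a quarter of the sum
of left multiplication by `[a b*, c d*]` and right multiplication by `[d* c, b* a]`. The difference
`{{a,b,c},d,·} - {c,{b,a,d},·}` has the same two coefficients. For functionals the operators
are composed in the opposite order, which turns this identity into the one for the last slot.
-/

theorem commutator_mul_left_add_mul_right {R : Type*} [NonUnitalRing R] (p q r s x : R) :
    (p * (r * x + x * s) + (r * x + x * s) * q) - (r * (p * x + x * q) + (p * x + x * q) * s) =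
      ⁅p, r⁆ * x + x * ⁅s, q⁆ := by
  simp only [Ring.lie_def, mul_add, add_mul, mul_sub, sub_mul, mul_assoc]
  abel

section TripleProduct

variable {B : Type*} [NormedRing B] [StarRing B] [NormedAlgebra ℂ B]

theorem tp_eq_mul_left_add_mul_right (a b x : B) :
    tp a b x = (2 : ℂ)⁻¹ • ((a * star b) * x + x * (star b * a)) := by
  rw [tp, mul_assoc x]

theorem star_tp (a b c : B) : star (tp a b c) = tp (star a) (star b) (star c) := by
  have star_half_smul (x : B) : star ((2 : ℂ)⁻¹ • x) = (2 : ℂ)⁻¹ • star x :=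
    mod_cast star_inv_natCast_smul (R := ℂ) 2 x
  simp only [tp, star_half_smul, star_add, star_mul, mul_assoc, add_comm]

theorem tp_mul_star_sub_mul_star_tp (a b c d : B) :
    tp a b c * star d - c * star (tp b a d) = (2 : ℂ)⁻¹ • ⁅a * star b, c * star d⁆ := by
  rw [star_tp]
  simp only [tp, Ring.lie_def, star_star, smul_mul_assoc, mul_smul_comm, ← smul_sub, mul_add,
    add_mul, mul_assoc]
  congr 1
  abel

theorem star_mul_tp_sub_star_tp_mul (a b c d : B) :
    star d * tp a b c - star (tp b a d) * c = (2 : ℂ)⁻¹ • ⁅star d * c, star b * a⁆ := by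
  rw [star_tp]
  simp only [tp, Ring.lie_def, star_star, smul_mul_assoc, mul_smul_comm, ← smul_sub, mul_add,
    add_mul, mul_assoc]
  congr 1
  abel

theorem tp_tp_sub_tp_tp (a b c d x : B) :
    tp a b (tp c d x) - tp c d (tp a b x) =
      (2 : ℂ)⁻¹ • (2 : ℂ)⁻¹ •
        (⁅a * star b, c * star d⁆ * x + x * ⁅star d * c, star b * a⁆) := by
  rw [← commutator_mul_left_add_mul_right]
  simp only [tp_eq_mul_left_add_mul_right, mul_smul_comm, smul_mul_assoc, ← smul_add, ← smul_sub]

theorem tp_tp_left_sub_tp_tp_middle (a b c d x : B) :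
    tp (tp a b c) d x - tp c (tp b a d) x =
      (2 : ℂ)⁻¹ • (2 : ℂ)⁻¹ •
        (⁅a * star b, c * star d⁆ * x + x * ⁅star d * c, star b * a⁆) :=
  calc
    _ = (2 : ℂ)⁻¹ • ((tp a b c * star d - c * star (tp b a d)) * x +
          x * (star d * tp a b c - star (tp b a d) * c)) := by
      rw [tp_eq_mul_left_add_mul_right _ d, tp_eq_mul_left_add_mul_right c, ← smul_sub,
        add_sub_add_comm, ← sub_mul, ← mul_sub]
    _ = _ := by
      rw [tp_mul_star_sub_mul_star_tp, star_mul_tp_sub_star_tp_mul, smul_mul_assoc,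
        mul_smul_comm, ← smul_add]

theorem tp_jordan_identity (a b c d x : B) :
    tp a b (tp c d x) = tp (tp a b c) d x - tp c (tp b a d) x + tp c d (tp a b x) := by
  rw [← sub_eq_iff_eq_add, tp_tp_sub_tp_tp, tp_tp_left_sub_tp_tp_middle]

theorem jordan_identity_functional_last_slot_general {F : Type*} [FunLike F B ℂ]
    [AddMonoidHomClass F B ℂ] (a b c d : B) (φ : F) :
    tOut a b (tOut c d φ) =
      tOut (tp a b c) d φ - tOut c (tp b a d) φ + tOut c d (tOut a b φ) := by
  funext x
  have jordan : tp d c (tp b a x) =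
      tp d (tp a b c) x - tp (tp b a d) c x + tp b a (tp d c x) := by
    rw [tp_jordan_identity b a d c x]
    abel
  simpa only [tOut, Pi.add_apply, Pi.sub_apply, map_add, map_sub] using congrArg φ jordan

end TripleProduct

/-- Jordan identity with the functional in the last slot:
`{a,b,{c,d,φ}} = {{a,b,c},d,φ} - {c,{b,a,d},φ} + {c,d,{a,b,φ}}`. -/
theorem jordan_identity_functional_last_slot (a b c d : A) (φ : A →L[ℂ] ℂ) :
    tOut a b (tOut c d ⇑φ) =
      tOut (tp a b c) d ⇑φ - tOut c (tp b a d) ⇑φ + tOut c d (tOut a b ⇑φ) :=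
  jordan_identity_functional_last_slot_general a b c d φ
end
end

section
/- Let A be a unital C*-algebra. For all a, c, d, e in A and every φ in the dual A*, the Jordan identity holds with the functional in the outer middle slot: {a,φ,{c,d,e}} = {{a,φ,c},d,e} - {c,{φ,a,d},e} + {c,d,{a,φ,e}} (an equality of functionals on A). -/
noncomputable section

variable {A : Type*} [NormedRing A] [StarRing A] [CStarRing A]
  [NormedAlgebra ℂ A] [CompleteSpace A] [StarModule ℂ A]

/-!
A functional in the middle slot turns the claim into a statement about where the argument `x` sits.
Two instances of the Jordan identity, one applying `{c,d,·}` to `{a,x,e}` and one applying `{e,x,·}`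
to `{a,d,c}`, express `{a,x,{c,d,e}}` and `{a,d,{c,x,e}}`. By symmetry in the outer variables the
terms `{c,d,{a,x,e}}` and `{e,x,{a,d,c}}` cancel when the two are added, and what is left is the
claim evaluated at `x`, before applying the functional and conjugating.
-/

/-- The axioms of a Jordan triple product `T a b c = {a,b,c}` other than additivity in each
variable: symmetry in the outer variables and the Jordan identity. -/
structure SatisfiesJordanTripleIdentities {E : Type*} [AddCommGroup E]
    (T : E → E → E → E) : Prop where
  outer_comm (a b c : E) : T a b c = T c b a
  jordan (a b c d e : E) :
    T a b (T c d e) = T (T a b c) d e - T c (T b a d) e + T c d (T a b e)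

/-- The triple product `{a,b,φ} = {φ,b,a}` of two elements with a functional `φ`, induced by a
triple product `T`; for `T = tp` it is `tOut`. -/
def outerFunctionalTriple {E B : Type*} (T : E → E → E → E) (a b : E) (φ : E → B) : E → B :=
  fun x => φ (T b a x)

/-- The triple product `{a,φ,b}` with a functional `φ` in the middle slot, induced by a triple
product `T`; for `T = tp` it is `tMid`. -/
def middleFunctionalTriple {E B : Type*} [Star B] (T : E → E → E → E) (a : E) (φ : E → B) (b : E) :
    E → B :=
  fun x => star (φ (T a x b))

theorem SatisfiesJordanTripleIdentities.add_swap_middle {E : Type*} [AddCommGroup E]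
    {T : E → E → E → E} (hT : SatisfiesJordanTripleIdentities T) (a c d e x : E) :
    T a x (T c d e) + T a d (T c x e) = T a (T d e x) c + T a (T d c x) e := by
  have jordan_cd : T c d (T a x e) =
      T e x (T a d c) - T a (T d c x) e + T a x (T c d e) := by
    rw [hT.jordan c d a x e, hT.outer_comm (T c d a) x e, hT.outer_comm c d a]
  have jordan_ex : T e x (T a d c) =
      T c d (T a x e) - T a (T d e x) c + T a d (T c x e) := by
    rw [hT.jordan e x a d c, hT.outer_comm (T e x a) d c, hT.outer_comm e x a,
      hT.outer_comm x e d, hT.outer_comm e x c]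
  grind

theorem satisfiesJordanTripleIdentities_smul_mul_star_mul {K R : Type*} [Star K]
    [NonUnitalRing R] [StarRing R] [DistribSMul K R] [IsScalarTower K R R] [SMulCommClass K R R]
    [StarModule K R] {r : K} (hr : IsSelfAdjoint r) :
    SatisfiesJordanTripleIdentities
      fun a b c : R => r • (a * star b * c + c * star b * a) where
  outer_comm a b c := by rw [add_comm]
  jordan a b c d e := by
    simp only [star_smul, hr.star_eq, star_add, star_mul, star_star, mul_add, add_mul,
      smul_mul_assoc, mul_smul_comm, smul_add, mul_assoc]
    abel

theorem satisfiesJordanTripleIdentities_tp {R : Type*} [NormedRing R] [StarRing R]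
    [NormedAlgebra ℂ R] [StarModule ℂ R] :
    SatisfiesJordanTripleIdentities (tp : R → R → R → R) :=
  satisfiesJordanTripleIdentities_smul_mul_star_mul (IsSelfAdjoint.ofNat 2).inv₀

theorem jordan_identity_functional_outer_middle_slot_general {E B F : Type*} [AddCommGroup E]
    [AddCommGroup B] [StarAddMonoid B] [FunLike F E B] [AddMonoidHomClass F E B]
    {T : E → E → E → E} (hT : SatisfiesJordanTripleIdentities T) (a c d e : E) (φ : F) :
    middleFunctionalTriple T a φ (T c d e) =
      outerFunctionalTriple T e d (middleFunctionalTriple T a φ c)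
        - middleFunctionalTriple T c (outerFunctionalTriple T d a φ) e
        + outerFunctionalTriple T c d (middleFunctionalTriple T a φ e) := by
  funext x
  have expand : T a x (T c d e) = T a (T d e x) c - T a d (T c x e) + T a (T d c x) e := by
    rw [sub_add_eq_add_sub, eq_sub_iff_add_eq, hT.add_swap_middle]
  simp only [middleFunctionalTriple, outerFunctionalTriple, Pi.add_apply, Pi.sub_apply, expand,
    map_add, map_sub, star_add, star_sub]

/-- Jordan identity with the functional in the outer middle slot:
`{a,φ,{c,d,e}} = {{a,φ,c},d,e} - {c,{φ,a,d},e} + {c,d,{a,φ,e}}`. -/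
theorem jordan_identity_functional_outer_middle_slot (a c d e : A) (φ : A →L[ℂ] ℂ) :
    tMid a ⇑φ (tp c d e) =
      tOut e d (tMid a ⇑φ c) - tMid c (tOut d a ⇑φ) e + tOut c d (tMid a ⇑φ e) :=
  jordan_identity_functional_outer_middle_slot_general satisfiesJordanTripleIdentities_tp a c d e φ
end
end

section
/- Let A be a unital C*-algebra. For all a, b, d, e in A and every φ in the dual A*, the Jordan identity holds with the functional in the first slot of the inner triple product: {a,b,{φ,d,e}} = {{a,b,φ},d,e} - {φ,{b,a,d},e} + {φ,d,{a,b,e}} (an equality of functionals on A). -/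
noncomputable section

variable {A : Type*} [NormedRing A] [StarRing A] [CStarRing A]
  [NormedAlgebra ℂ A] [CompleteSpace A] [StarModule ℂ A]

/-! Up to the factor `1/2`, the operator `{x, y, ·}` is `z ↦ p z + z q` with `p = x y*` and
`q = y* x`, while the adjoint of `{y, x, v}` comes from the operator `z ↦ q z + z p` applied to
`v*`. Applying the first operator to `u` and `w`, the second to `v`, and summing the resulting
products with signs `+, +, -`, the inner terms `u q v w` and `u v p w` cancel and
`p u v w + u v w q` remains. Symmetrizing in `u` and `w` gives the Jordan identity in the algebra,
and the identity for functionals is its transpose. -/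

section TwoSidedMul

variable {R : Type*}

/-- The additive operator `z ↦ p z + z q`, the common form of the left multiplications of the
triple product; `p` multiplies from the left and `q` from the right. -/
def twoSidedMul [NonUnitalNonAssocSemiring R] (p q : R) : R →+ R :=
  AddMonoidHom.mulLeft p + AddMonoidHom.mulRight q

theorem twoSidedMul_apply [NonUnitalNonAssocSemiring R] (p q z : R) :
    twoSidedMul p q z = p * z + z * q := rfl

theorem twoSidedMul_mul_mul [NonUnitalRing R] (p q u v w : R) :
    twoSidedMul p q (u * v * w) =
      twoSidedMul p q u * v * w - u * twoSidedMul q p v * w + u * v * twoSidedMul p q w := by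
  simp only [twoSidedMul_apply, mul_add, add_mul, mul_assoc]
  abel

theorem star_twoSidedMul [NonUnitalNonAssocSemiring R] [StarRing R] (p q z : R) :
    star (twoSidedMul p q z) = twoSidedMul (star q) (star p) (star z) := by
  simp only [twoSidedMul_apply, star_add, star_mul, add_comm]

end TwoSidedMul

section TripleProduct

variable {B : Type*} [NormedRing B] [StarRing B] [NormedAlgebra ℂ B]

theorem tp_eq_smul_twoSidedMul (x y z : B) :
    tp x y z = (2 : ℂ)⁻¹ • twoSidedMul (x * star y) (star y * x) z := by
  simp only [tp, twoSidedMul_apply, mul_assoc]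

theorem tp_add_right (x y z w : B) : tp x y (z + w) = tp x y z + tp x y w := by
  simp only [tp_eq_smul_twoSidedMul, map_add, smul_add]

theorem tp_smul_right (c : ℂ) (x y z : B) : tp x y (c • z) = c • tp x y z := by
  simp only [tp, mul_smul_comm, smul_mul_assoc, ← smul_add, smul_comm c]

theorem star_tp_s4 (x y z : B) :
    star (tp x y z) = (2 : ℂ)⁻¹ • twoSidedMul (star x * y) (y * star x) (star z) := by
  have star_half_smul (w : B) : star ((2 : ℂ)⁻¹ • w) = (2 : ℂ)⁻¹ • star w :=
    mod_cast star_inv_natCast_smul (R := ℂ) 2 w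
  rw [tp_eq_smul_twoSidedMul, star_half_smul, star_twoSidedMul, star_mul, star_mul, star_star]

theorem tp_mul_star_mul (x y u v w : B) :
    tp x y (u * star v * w) =
      tp x y u * star v * w - u * star (tp y x v) * w + u * star v * tp x y w := by
  rw [star_tp_s4]
  simp only [tp_eq_smul_twoSidedMul, twoSidedMul_mul_mul, smul_add, smul_sub, mul_smul_comm,
    smul_mul_assoc]

theorem tp_jordan_identity_s4 (x y u v w : B) :
    tp x y (tp u v w) = tp (tp x y u) v w - tp u (tp y x v) w + tp u v (tp x y w) :=
  calc
    tp x y (tp u v w)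
      = (2 : ℂ)⁻¹ • (tp x y (u * star v * w) + tp x y (w * star v * u)) := by
        rw [tp.eq_def u, tp_smul_right, tp_add_right]
    _ = (2 : ℂ)⁻¹ • ((tp x y u * star v * w + w * star v * tp x y u)
          - (u * star (tp y x v) * w + w * star (tp y x v) * u)
          + (u * star v * tp x y w + tp x y w * star v * u)) := by
        rw [tp_mul_star_mul, tp_mul_star_mul]
        congr 1
        abel
    _ = tp (tp x y u) v w - tp u (tp y x v) w + tp u v (tp x y w) := by
        rw [smul_add, smul_sub, ← tp, ← tp, ← tp]

theorem jordan_identity_functional_inner_first_slot_general {F : Type*} [FunLike F B ℂ]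
    [AddMonoidHomClass F B ℂ] (a b d e : B) (φ : F) :
    tOut a b (tOut e d φ) =
      tOut e d (tOut a b φ) - tOut e (tp b a d) φ + tOut (tp a b e) d φ := by
  funext x
  have transposed : φ (tp b a (tp d e x)) =
      φ (tp (tp b a d) e x) - φ (tp d (tp a b e) x) + φ (tp d e (tp b a x)) := by
    rw [tp_jordan_identity_s4, map_add, map_sub]
  simp only [tOut, Pi.add_apply, Pi.sub_apply]
  linear_combination -transposed

end TripleProduct

/-- Jordan identity with the functional in the first slot of the inner triple product:
`{a,b,{φ,d,e}} = {{a,b,φ},d,e} - {φ,{b,a,d},e} + {φ,d,{a,b,e}}`. -/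
theorem jordan_identity_functional_inner_first_slot (a b d e : A) (φ : A →L[ℂ] ℂ) :
    tOut a b (tOut e d ⇑φ) =
      tOut e d (tOut a b ⇑φ) - tOut e (tp b a d) ⇑φ + tOut (tp a b e) d ⇑φ :=
  jordan_identity_functional_inner_first_slot_general a b d e φ
end
end

section
/- Let A be a unital C*-algebra. Suppose ξ_1,…,ξ_n, η_1,…,η_n ∈ A* are self-adjoint functionals (ξ_j* = ξ_j, η_j* = η_j) and c_1,…,c_n, d_1,…,d_n ∈ A are self-adjoint elements, and set φ := Σ_{j=1}^n ([ξ_j,c_j] - [η_j,d_j]) ∈ A*. Then for every x ∈ A, D_φ(x*) = Σ_{j=1}^n ({ξ_j,2c_j,x} - {2c_j,ξ_j,x} - {η_j,2d_j,x} + {2d_j,η_j,x}); in particular the map x ↦ D_φ(x*) is an inner triple derivation from A into A*. -/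
noncomputable section

variable {A : Type*} [NormedRing A] [StarRing A] [CStarRing A]
  [NormedAlgebra ℂ A] [CompleteSpace A] [StarModule ℂ A]

/-!
Evaluated at `y`, the functional `D_[ξ,c](x*)` is `ξ [c, [x*, y]]`. For `c = c*` the double
commutator is `[c, [x*, y]] = {2c,x,y} - {2c,y,x}*`, and for `ξ = ξ*` the last adjoint becomes the
complex conjugation in `{2c,ξ,x}`. Hence `D_[ξ,c](x*) = {ξ,2c,x} - {2c,ξ,x}`, which is minus
`L(2c,ξ) - L(ξ,2c)` at `x`.
-/

section General

variable {B : Type*} [NormedRing B]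

theorem Dd_sub (φ ψ : B → ℂ) (x : B) : Dd (φ - ψ) x = Dd φ x - Dd ψ x :=
  rfl

theorem Dd_sum {ι : Type*} (s : Finset ι) (φ : ι → B → ℂ) (x : B) :
    Dd (∑ j ∈ s, φ j) x = ∑ j ∈ s, Dd (φ j) x := by
  ext y
  simp only [Dd, Finset.sum_apply]

variable [StarRing B]

theorem conj_apply_of_fstar_eq {ξ : B → ℂ} (hξ : fstar ξ = ξ) (z : B) :
    starRingEnd ℂ (ξ z) = ξ (star z) := by
  simpa only [fstar, star_star] using congrFun hξ (star z)

variable [NormedAlgebra ℂ B]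

theorem tp_neg_left (a b c : B) : tp (-a) b c = -tp a b c := by
  simp only [tp, neg_mul, mul_neg, ← neg_add, smul_neg]

theorem tp_two_nsmul_left (a b c : B) :
    tp (2 • a) b c = a * star b * c + c * star b * a := by
  simp only [tp, smul_mul_assoc, mul_smul_comm, ← smul_add]
  rw [← Nat.cast_smul_eq_nsmul ℂ, Nat.cast_ofNat, inv_smul_smul₀ two_ne_zero]

theorem lie_lie_star_eq_tp_sub_star_tp {c : B} (hc : star c = c) (x y : B) :
    ⁅c, ⁅star x, y⁆⁆ = tp (2 • c) x y - star (tp (2 • c) y x) := by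
  simp only [tp_two_nsmul_left, Ring.lie_def, star_add, star_mul, star_star, hc]
  noncomm_ring

section AdditiveFunctional

variable {F : Type*} [FunLike F B ℂ] [AddMonoidHomClass F B ℂ]

theorem tMid_neg_left (b : B) (φ : F) (a : B) : tMid (-b) φ a = -tMid b φ a := by
  ext x
  simp only [tMid, tp_neg_left, map_neg, Pi.neg_apply]

theorem tOut_neg_right (a b : B) (φ : F) : tOut a (-b) φ = -tOut a b φ := by
  ext x
  simp only [tOut, tp_neg_left, map_neg, Pi.neg_apply]

theorem Dd_fcomm_star {ξ : F} {c : B} (hξ : fstar ξ = ξ) (hc : star c = c) (x : B) :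
    Dd (fcomm ξ c) (star x) = tOut x (2 • c) ξ - tMid (2 • c) ξ x := by
  ext y
  calc Dd (fcomm ξ c) (star x) y
      = ξ ⁅c, ⁅star x, y⁆⁆ := rfl
    _ = ξ (tp (2 • c) x y) - ξ (star (tp (2 • c) y x)) := by
        rw [lie_lie_star_eq_tp_sub_star_tp hc, map_sub]
    _ = ξ (tp (2 • c) x y) - starRingEnd ℂ (ξ (tp (2 • c) y x)) := by
        rw [conj_apply_of_fstar_eq hξ]

end AdditiveFunctional

/-- Inner triple derivations from `B` to its continuous dual: the finite sums of maps
`L(b,φ) - L(φ,b)`, whose value at `a` is `{b,φ,a} - {φ,b,a}`. Values are plain functions `B → ℂ`, as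
in `tMid` and `tOut`, but the functionals `φ` are required to be continuous and linear. -/
def IsInnerTripleDerivation (T : B → B → ℂ) : Prop :=
  ∃ (m : ℕ) (bs : Fin m → B) (φs : Fin m → (B →L[ℂ] ℂ)),
    ∀ a : B, T a = ∑ i, (tMid (bs i) ⇑(φs i) a - tOut a (bs i) ⇑(φs i))

namespace IsInnerTripleDerivation

theorem tMid_sub_tOut (b : B) (φ : B →L[ℂ] ℂ) :
    IsInnerTripleDerivation fun a => tMid b φ a - tOut a b φ :=
  ⟨1, fun _ => b, fun _ => φ, fun _ => by simp only [Fin.sum_univ_one]⟩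

theorem zero : IsInnerTripleDerivation (0 : B → B → ℂ) :=
  ⟨0, Fin.elim0, Fin.elim0, fun _ => by simp only [Fin.sum_univ_zero, Pi.zero_apply]⟩

theorem add {S T : B → B → ℂ} (hS : IsInnerTripleDerivation S)
    (hT : IsInnerTripleDerivation T) : IsInnerTripleDerivation (S + T) := by
  obtain ⟨m, bs, φs, hS⟩ := hS
  obtain ⟨n, cs, ψs, hT⟩ := hT
  refine ⟨m + n, Fin.append bs cs, Fin.append φs ψs, fun a => ?_⟩
  simp only [Pi.add_apply, hS, hT, Fin.sum_univ_add, Fin.append_left, Fin.append_right]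

theorem neg {T : B → B → ℂ} (hT : IsInnerTripleDerivation T) :
    IsInnerTripleDerivation (-T) := by
  obtain ⟨m, bs, φs, hT⟩ := hT
  refine ⟨m, -bs, φs, fun a => ?_⟩
  simp only [Pi.neg_apply, hT, tMid_neg_left, tOut_neg_right, ← neg_sub', Finset.sum_neg_distrib]

theorem sub {S T : B → B → ℂ} (hS : IsInnerTripleDerivation S)
    (hT : IsInnerTripleDerivation T) : IsInnerTripleDerivation (S - T) :=
  sub_eq_add_neg S T ▸ hS.add hT.neg

theorem sum {ι : Type*} {s : Finset ι} {T : ι → B → B → ℂ}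
    (hT : ∀ j ∈ s, IsInnerTripleDerivation (T j)) : IsInnerTripleDerivation (∑ j ∈ s, T j) :=
  Finset.sum_induction T IsInnerTripleDerivation (fun _ _ => add) zero hT

theorem Dd_fcomm_comp_star {ξ : B →L[ℂ] ℂ} {c : B} (hξ : fstar ξ = ξ) (hc : star c = c) :
    IsInnerTripleDerivation fun x => Dd (fcomm ξ c) (star x) := by
  simp only [Dd_fcomm_star hξ hc, ← neg_sub (tMid _ _ _)]
  exact (tMid_sub_tOut (2 • c) ξ).neg

end IsInnerTripleDerivation

theorem inner_derivation_star_is_inner_triple_derivation_general {ι : Type*} [Fintype ι]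
    (ξ η : ι → (B →L[ℂ] ℂ)) (c d : ι → B)
    (hξ : ∀ j, fstar ⇑(ξ j) = ⇑(ξ j)) (hη : ∀ j, fstar ⇑(η j) = ⇑(η j))
    (hc : ∀ j, star (c j) = c j) (hd : ∀ j, star (d j) = d j)
    (φ : B → ℂ) (hφ : φ = ∑ j, (fcomm ⇑(ξ j) (c j) - fcomm ⇑(η j) (d j))) :
    (∀ x : B,
      Dd φ (star x) =
        ∑ j, (tOut x (2 • c j) ⇑(ξ j) - tMid (2 • c j) ⇑(ξ j) x
              - tOut x (2 • d j) ⇑(η j) + tMid (2 • d j) ⇑(η j) x)) ∧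
    IsInnerTripleDerivation fun x => Dd φ (star x) := by
  have Dd_eq_sum (x : B) : Dd φ (star x) =
      ∑ j, (Dd (fcomm (ξ j) (c j)) (star x) - Dd (fcomm (η j) (d j)) (star x)) := by
    simp only [hφ, Dd_sum, Dd_sub]
  constructor
  · intro x
    simp only [Dd_eq_sum, Dd_fcomm_star (hξ _) (hc _), Dd_fcomm_star (hη _) (hd _), sub_add]
  · convert IsInnerTripleDerivation.sum (s := Finset.univ) fun j _ =>
      (IsInnerTripleDerivation.Dd_fcomm_comp_star (hξ j) (hc j)).sub
        (IsInnerTripleDerivation.Dd_fcomm_comp_star (hη j) (hd j)) with x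
    simp only [Dd_eq_sum, Finset.sum_apply, Pi.sub_apply]

end General

/-- If `φ := Σ_j ([ξ_j,c_j] - [η_j,d_j])` with `ξ_j, η_j` self-adjoint functionals and
`c_j, d_j` self-adjoint elements, then for every `x`,
`D_φ(x*) = Σ_j ({ξ_j,2c_j,x} - {2c_j,ξ_j,x} - {η_j,2d_j,x} + {2d_j,η_j,x})`;
in particular `x ↦ D_φ(x*)` is an inner triple derivation from `A` into `A*`. -/
theorem inner_derivation_star_is_inner_triple_derivation (n : ℕ)
    (ξ η : Fin n → (A →L[ℂ] ℂ)) (c d : Fin n → A)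
    (hξ : ∀ j, fstar ⇑(ξ j) = ⇑(ξ j)) (hη : ∀ j, fstar ⇑(η j) = ⇑(η j))
    (hc : ∀ j, star (c j) = c j) (hd : ∀ j, star (d j) = d j)
    (φ : A →L[ℂ] ℂ)
    (hφ : ⇑φ = ∑ j, (fcomm ⇑(ξ j) (c j) - fcomm ⇑(η j) (d j))) :
    (∀ x : A,
      Dd ⇑φ (star x) =
        ∑ j, (tOut x (2 • c j) ⇑(ξ j) - tMid (2 • c j) ⇑(ξ j) x
              - tOut x (2 • d j) ⇑(η j) + tMid (2 • d j) ⇑(η j) x)) ∧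
    (∃ (m : ℕ) (bs : Fin m → A) (φs : Fin m → (A →L[ℂ] ℂ)),
      ∀ a : A,
        Dd ⇑φ (star a) = ∑ i, (tMid (bs i) ⇑(φs i) a - tOut a (bs i) ⇑(φs i))) := by
  exact inner_derivation_star_is_inner_triple_derivation_general ξ η c d hξ hη hc hd φ hφ
end
end

section
/- Let A be a unital C*-algebra, ψ, φ_1,…,φ_n ∈ A*, b_1,…,b_n ∈ A, and ε > 0. If the conjugate-linear operator D_ψ∘* - Σ_{j=1}^n (L(φ_j,b_j) - L(b_j,φ_j)) from A to A* has operator norm at most ε, then for all a, x ∈ A: |ψ([a,x]) - (1/2) Σ_{j=1}^n (φ_j·b_j - b_j*·φ_j*)([a,x])| ≤ 2ε‖a‖‖x‖, where [a,x] = ax - xa. -/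
noncomputable section

variable {A : Type*} [NormedRing A] [StarRing A] [CStarRing A]
  [NormedAlgebra ℂ A] [CompleteSpace A] [StarModule ℂ A]

/-!
Write `T` for the operator of norm at most `ε` and put `S a := T a*`. The map
`S ↦ S a x - S x a + S 1 [a, x]` is linear in `S`; it sends `D_ψ` to `2ψ([a, x])`, and it sends
`(L(φ, b) - L(b, φ)) ∘ *` to `(φ·b - b*·φ*)([a, x])`, the term at `1` cancelling the anticommutator
part left over by skew-symmetrisation. Bounding the three values of `S` gives twice the estimate.
-/

theorem norm_sub_swap_add_one_commutator_le {R E : Type*} [SeminormedRing R]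
    [SeminormedAddCommGroup E] {S : R → R → E} {ε : ℝ} (hε : 0 ≤ ε)
    (hS : ∀ a x, ‖S a x‖ ≤ ε * ‖a‖ * ‖x‖) (a x : R) :
    ‖S a x - S x a + S 1 (a * x - x * a)‖ ≤ 2 * ((1 + ‖(1 : R)‖) * ε * ‖a‖ * ‖x‖) := by
  have hcomm : ‖a * x - x * a‖ ≤ 2 * (‖a‖ * ‖x‖) := by
    linarith [norm_sub_le (a * x) (x * a), norm_mul_le a x, norm_mul_le x a, mul_comm ‖a‖ ‖x‖]
  calc ‖S a x - S x a + S 1 (a * x - x * a)‖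
      ≤ ‖S a x‖ + ‖S x a‖ + ‖S 1 (a * x - x * a)‖ :=
        norm_add_le_of_le (norm_sub_le _ _) le_rfl
    _ ≤ ε * ‖a‖ * ‖x‖ + ε * ‖x‖ * ‖a‖ + ε * ‖(1 : R)‖ * ‖a * x - x * a‖ := by
        gcongr <;> exact hS _ _
    _ ≤ ε * ‖a‖ * ‖x‖ + ε * ‖x‖ * ‖a‖ + ε * ‖(1 : R)‖ * (2 * (‖a‖ * ‖x‖)) := by gcongr
    _ = 2 * ((1 + ‖(1 : R)‖) * ε * ‖a‖ * ‖x‖) := by ring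

section StarAlgebra

variable {B : Type*} [NormedRing B]

theorem Dd_sub_swap_add_one_commutator {F : Type*} [FunLike F B ℂ] [AddMonoidHomClass F B ℂ]
    (ψ : F) (a x : B) :
    Dd ψ a x - Dd ψ x a + Dd ψ 1 (a * x - x * a) = 2 * ψ (a * x - x * a) := by
  simp only [Dd, one_mul, mul_one, map_sub]
  ring

variable [StarRing B]

theorem fstar_sub {F : Type*} [FunLike F B ℂ] [AddMonoidHomClass F B ℂ] (φ : F)
    (u v : B) : fstar φ (u - v) = fstar φ u - fstar φ v := by
  simp only [fstar, star_sub, map_sub]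

variable [NormedAlgebra ℂ B]

/-- The inner triple derivation `δ(φ, b) = L(φ, b) - L(b, φ)`, where `L(φ, b)` is
`a ↦ {φ, b, a} = {a, b, φ}` and `L(b, φ)` is `a ↦ {b, φ, a}`. -/
def innerTripleDerivation (φ : B → ℂ) (b a : B) : B → ℂ :=
  tOut a b φ - tMid b φ a

theorem innerTripleDerivation_star_apply (φ : B →ₗ[ℂ] ℂ) (a b x : B) :
    innerTripleDerivation φ b (star a) x =
      2⁻¹ * (φ (b * a * x) + φ (x * a * b) -
        (fstar φ (a * x * star b) + fstar φ (star b * x * a))) := by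
  simp only [innerTripleDerivation, Pi.sub_apply, tOut, tMid, tp, fstar, star_star, star_mul,
    map_smul, map_add, smul_eq_mul, map_mul, map_inv₀, Complex.conj_ofNat, mul_assoc]
  ring

theorem innerTripleDerivation_sub_swap_add_one_commutator (φ : B →ₗ[ℂ] ℂ) (a b x : B) :
    innerTripleDerivation φ b (star a) x - innerTripleDerivation φ b (star x) a +
        innerTripleDerivation φ b (star 1) (a * x - x * a) =
      (actR φ b - actL (star b) (fstar φ)) (a * x - x * a) := by
  simp only [innerTripleDerivation_star_apply, Pi.sub_apply, actR, actL, mul_one, one_mul, mul_sub,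
    sub_mul, map_sub, fstar_sub, ← mul_assoc]
  ring

variable {ι : Type*} [Fintype ι]

/-- The operator `D_ψ ∘ * - ∑ j, δ(φ_j, b_j)`, measuring how far `D_ψ ∘ *` is from being the inner
triple derivation `∑ j, δ(φ_j, b_j)`. -/
def tripleDefect (ψ : B → ℂ) (φs : ι → B → ℂ) (bs : ι → B) (a : B) : B → ℂ :=
  Dd ψ (star a) - ∑ j, innerTripleDerivation (φs j) (bs j) a

theorem tripleDefect_sub_swap_add_one_commutator (ψ : B →ₗ[ℂ] ℂ) (φs : ι → B →ₗ[ℂ] ℂ) (bs : ι → B)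
    (a x : B) :
    tripleDefect ψ (fun j => φs j) bs (star a) x - tripleDefect ψ (fun j => φs j) bs (star x) a +
        tripleDefect ψ (fun j => φs j) bs (star 1) (a * x - x * a) =
      2 * (ψ (a * x - x * a) -
        2⁻¹ * (∑ j, (actR (φs j) (bs j) - actL (star (bs j)) (fstar (φs j)))) (a * x - x * a)) := by
  simp only [tripleDefect, Pi.sub_apply _ (∑ _, _), Finset.sum_apply, star_star,
    ← innerTripleDerivation_sub_swap_add_one_commutator, Finset.sum_add_distrib,
    Finset.sum_sub_distrib]
  linear_combination Dd_sub_swap_add_one_commutator ψ a x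

theorem approx_commutator_estimate_general [NormedStarGroup B] (ψ : B →ₗ[ℂ] ℂ)
    (φs : ι → B →ₗ[ℂ] ℂ) (bs : ι → B) {ε : ℝ} (hε : 0 ≤ ε)
    (h : ∀ x y : B,
      ‖(Dd ψ (star x) - ∑ j, (tOut x (bs j) (φs j) - tMid (bs j) (φs j) x)) y‖
        ≤ ε * ‖x‖ * ‖y‖)
    (a x : B) :
    ‖ψ (a * x - x * a) -
        2⁻¹ * (∑ j, (actR (φs j) (bs j) - actL (star (bs j)) (fstar (φs j)))) (a * x - x * a)‖
      ≤ (1 + ‖(1 : B)‖) * ε * ‖a‖ * ‖x‖ := by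
  have hS (u v : B) : ‖tripleDefect ψ (fun j => φs j) bs (star u) v‖ ≤ ε * ‖u‖ * ‖v‖ :=
    (h (star u) v).trans_eq (by rw [norm_star])
  have htwice := norm_sub_swap_add_one_commutator_le hε hS a x
  rw [tripleDefect_sub_swap_add_one_commutator, norm_mul, Complex.norm_ofNat] at htwice
  exact le_of_mul_le_mul_left htwice two_pos

end StarAlgebra

/-- If the conjugate-linear operator `D_ψ∘* - Σ_j (L(φ_j,b_j) - L(b_j,φ_j))` has
operator norm at most `ε`, then
`|ψ([a,x]) - (1/2) Σ_j (φ_j·b_j - b_j*·φ_j*)([a,x])| ≤ 2ε‖a‖‖x‖`. -/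
theorem approx_commutator_estimate (ψ : A →L[ℂ] ℂ) (n : ℕ)
    (φs : Fin n → (A →L[ℂ] ℂ)) (bs : Fin n → A) (ε : ℝ) (hε : 0 < ε)
    (h : ∀ x y : A,
      ‖(Dd ⇑ψ (star x) - ∑ j, (tOut x (bs j) ⇑(φs j) - tMid (bs j) ⇑(φs j) x)) y‖
        ≤ ε * ‖x‖ * ‖y‖) :
    ∀ a x : A,
      ‖ψ (a * x - x * a) -
          (2 : ℂ)⁻¹ *
            (∑ j, (actR ⇑(φs j) (bs j) - actL (star (bs j)) (fstar ⇑(φs j))))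
              (a * x - x * a)‖
        ≤ 2 * ε * ‖a‖ * ‖x‖ := by
  intro a x
  have hone : ‖(1 : A)‖ ≤ 1 := (IsStarProjection.one A).norm_le
  exact (approx_commutator_estimate_general (ψ : A →ₗ[ℂ] ℂ) (fun j => (φs j : A →ₗ[ℂ] ℂ)) bs hε.le
    h a x).trans (by gcongr; linarith)
end
end

section
/- Let A be a unital C*-algebra, ψ, φ_1,…,φ_n ∈ A*, b_1,…,b_n ∈ A, and ε > 0. If the conjugate-linear operator D_ψ∘* - Σ_{j=1}^n (L(φ_j,b_j) - L(b_j,φ_j)) from A to A* has operator norm at most ε, then for all a, x ∈ A: |4ψ([a,x]) - Σ_{j=1}^n [φ_j,b_j]([a,x]) - Σ_{j=1}^n [φ_j*,b_j*]([a,x])| ≤ 10ε‖a‖‖x‖, where [a,x] = ax - xa. -/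
noncomputable section

variable {A : Type*} [NormedRing A] [StarRing A] [CStarRing A]
  [NormedAlgebra ℂ A] [CompleteSpace A] [StarModule ℂ A]

/-!
Write `T = D_ψ∘* - ∑ j, δ(φ_j,b_j)`, where `δ(φ,b) = L(φ,b) - L(b,φ)`, and antisymmetrize the form
`(a, x) ↦ T(a*)(x)`. The derivation contributes `D_ψ(a)(x) - D_ψ(x)(a) = 2ψ([a,x])`. Since
`2({b,a*,x} - {b,x*,a}) = [b,[a,x]]`, each triple derivation contributes
`([φ,b]([a,x]) + [φ*,b*]([a,x])) / 2`. So the quantity to be estimated is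
`2(T(a*)(x) - T(x*)(a))`, of absolute value at most `4ε‖a‖‖x‖`.
-/

lemma Dd_sub_Dd_swap {B F : Type*} [NormedRing B] [FunLike F B ℂ] [AddMonoidHomClass F B ℂ]
    (ψ : F) (a x : B) : Dd ψ a x - Dd ψ x a = 2 * ψ (a * x - x * a) := by
  simp only [Dd, map_sub]
  ring

section InnerTripleDerivations

variable {B : Type*} [NormedRing B] [StarRing B] [NormedAlgebra ℂ B]

/-- The inner triple derivation `δ(φ,b) = L(φ,b) - L(b,φ) : x ↦ {φ,b,x} - {b,φ,x}`. -/
def innerTripleDeriv (φ : B → ℂ) (b x : B) : B → ℂ := tOut x b φ - tMid b φ x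

/-- The operator `D_ψ∘* - ∑ j ∈ s, δ(φ_j,b_j)`, measuring how far `D_ψ∘*` is from a finite sum of
inner triple derivations. -/
def tripleDerivDefect {ι : Type*} (ψ : B → ℂ) (s : Finset ι) (φs : ι → B → ℂ) (bs : ι → B)
    (x : B) : B → ℂ :=
  Dd ψ (star x) - ∑ j ∈ s, innerTripleDeriv (φs j) (bs j) x

lemma two_smul_tp_star_sub_tp_star (a b x : B) :
    (2 : ℂ) • (tp b (star a) x - tp b (star x) a) =
      b * (a * x - x * a) - (a * x - x * a) * b := by
  simp only [tp, star_star, ← smul_sub, smul_inv_smul₀ (two_ne_zero (α := ℂ))]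
  noncomm_ring

lemma two_mul_tOut_star_sub_tOut_star (φ : B →ₗ[ℂ] ℂ) (a b x : B) :
    2 * (tOut (star a) b φ x - tOut (star x) b φ a) = fcomm φ b (a * x - x * a) := by
  simp only [tOut, fcomm, ← two_smul_tp_star_sub_tp_star, map_smul, map_sub, smul_eq_mul]

-- Since `[a,x]* = [x*,a*]`, this is the conjugate of the triple product identity at `x*, a*`.
lemma two_mul_tMid_star_sub_tMid_star (φ : B →ₗ[ℂ] ℂ) (a b x : B) :
    2 * (tMid b φ (star a) x - tMid b φ (star x) a) =
      -fcomm (fstar φ) (star b) (a * x - x * a) := by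
  have htp := congr_arg φ (two_smul_tp_star_sub_tp_star (star x) b (star a))
  have hconj := congr_arg (starRingEnd ℂ) htp
  simp only [star_star, map_smul, map_sub, map_mul, smul_eq_mul, Complex.conj_ofNat] at hconj
  simp only [tMid, fcomm, fstar, star_sub, star_mul, star_star, map_sub, hconj]
  ring

lemma two_mul_innerTripleDeriv_star_sub (φ : B →ₗ[ℂ] ℂ) (a b x : B) :
    2 * (innerTripleDeriv φ b (star a) x - innerTripleDeriv φ b (star x) a) =
      fcomm φ b (a * x - x * a) + fcomm (fstar φ) (star b) (a * x - x * a) := by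
  simp only [innerTripleDeriv, Pi.sub_apply]
  linear_combination two_mul_tOut_star_sub_tOut_star φ a b x -
    two_mul_tMid_star_sub_tMid_star φ a b x

lemma two_mul_tripleDerivDefect_star_sub {ι : Type*} (ψ : B →ₗ[ℂ] ℂ) (s : Finset ι)
    (φs : ι → B →ₗ[ℂ] ℂ) (bs : ι → B) (a x : B) :
    2 * (tripleDerivDefect ψ s (fun j => φs j) bs (star a) x -
        tripleDerivDefect ψ s (fun j => φs j) bs (star x) a) =
      4 * ψ (a * x - x * a) -
        (∑ j ∈ s, fcomm (φs j) (bs j)) (a * x - x * a) -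
        (∑ j ∈ s, fcomm (fstar (φs j)) (star (bs j))) (a * x - x * a) := by
  have hψ : Dd ψ a x - Dd ψ x a = 2 * ψ (a * x - x * a) := Dd_sub_Dd_swap ψ a x
  have hφ : 2 * (∑ j ∈ s, innerTripleDeriv (φs j) (bs j) (star a) x -
        ∑ j ∈ s, innerTripleDeriv (φs j) (bs j) (star x) a) =
      ∑ j ∈ s, fcomm (φs j) (bs j) (a * x - x * a) +
        ∑ j ∈ s, fcomm (fstar (φs j)) (star (bs j)) (a * x - x * a) := by
    simp only [← Finset.sum_sub_distrib, Finset.mul_sum, two_mul_innerTripleDeriv_star_sub,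
      Finset.sum_add_distrib]
  simp only [tripleDerivDefect, star_star, Pi.sub_apply, Finset.sum_apply]
  linear_combination 2 * hψ - hφ

theorem approx_commutator_estimate'_general [NormedStarGroup B] {ι : Type*} (ψ : B →ₗ[ℂ] ℂ)
    (s : Finset ι) (φs : ι → B →ₗ[ℂ] ℂ) (bs : ι → B) (ε : ℝ)
    (h : ∀ x y : B, ‖tripleDerivDefect ψ s (fun j => φs j) bs x y‖ ≤ ε * ‖x‖ * ‖y‖) (a x : B) :
    ‖4 * ψ (a * x - x * a) -
        (∑ j ∈ s, fcomm (φs j) (bs j)) (a * x - x * a) -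
        (∑ j ∈ s, fcomm (fstar (φs j)) (star (bs j))) (a * x - x * a)‖
      ≤ 4 * ε * ‖a‖ * ‖x‖ := by
  set T := tripleDerivDefect ψ s (fun j => φs j) bs
  have hT (u v : B) : ‖T (star u) v‖ ≤ ε * ‖u‖ * ‖v‖ := norm_star u ▸ h (star u) v
  rw [← two_mul_tripleDerivDefect_star_sub]
  calc ‖2 * (T (star a) x - T (star x) a)‖
      = 2 * ‖T (star a) x - T (star x) a‖ := by rw [norm_mul, Complex.norm_ofNat]
    _ ≤ 2 * (‖T (star a) x‖ + ‖T (star x) a‖) := by gcongr; exact norm_sub_le _ _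
    _ ≤ 2 * (ε * ‖a‖ * ‖x‖ + ε * ‖x‖ * ‖a‖) := by gcongr <;> exact hT _ _
    _ = 4 * ε * ‖a‖ * ‖x‖ := by ring

end InnerTripleDerivations

/-- If the conjugate-linear operator `D_ψ∘* - Σ_j (L(φ_j,b_j) - L(b_j,φ_j))` has
operator norm at most `ε`, then
`|4ψ([a,x]) - Σ_j [φ_j,b_j]([a,x]) - Σ_j [φ_j*,b_j*]([a,x])| ≤ 10ε‖a‖‖x‖`. -/
theorem approx_commutator_estimate' (ψ : A →L[ℂ] ℂ) (n : ℕ)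
    (φs : Fin n → (A →L[ℂ] ℂ)) (bs : Fin n → A) (ε : ℝ) (hε : 0 < ε)
    (h : ∀ x y : A,
      ‖(Dd ⇑ψ (star x) - ∑ j, (tOut x (bs j) ⇑(φs j) - tMid (bs j) ⇑(φs j) x)) y‖
        ≤ ε * ‖x‖ * ‖y‖) :
    ∀ a x : A,
      ‖4 * ψ (a * x - x * a) -
          (∑ j, fcomm ⇑(φs j) (bs j)) (a * x - x * a) -
          (∑ j, fcomm (fstar ⇑(φs j)) (star (bs j))) (a * x - x * a)‖
        ≤ 10 * ε * ‖a‖ * ‖x‖ := by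
  intro a x
  calc _ ≤ 4 * ε * ‖a‖ * ‖x‖ :=
        approx_commutator_estimate'_general (ψ : A →ₗ[ℂ] ℂ) Finset.univ
          (fun j => (φs j : A →ₗ[ℂ] ℂ)) bs ε h a x
    _ ≤ 10 * ε * ‖a‖ * ‖x‖ := by gcongr; norm_num
end
end

section
/- Let A be a unital C*-algebra, ψ, φ_1,…,φ_n ∈ A* and b_1,…,b_n ∈ A. If D_ψ∘* = Σ_{j=1}^n (L(φ_j,b_j) - L(b_j,φ_j)) as maps from A to A*, then for all a, x ∈ A: ψ([a,x]) = (1/2) Σ_{j=1}^n (φ_j·b_j - b_j*·φ_j*)([a,x]), where [a,x] = ax - xa. -/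
noncomputable section

variable {A : Type*} [NormedRing A] [StarRing A] [CStarRing A]
  [NormedAlgebra ℂ A] [CompleteSpace A] [StarModule ℂ A]

/-! Write `S χ = (χ - χ*) / 2`. The two halves of each triple product combine to
`(L(φ,b)(x) - L(b,φ)(x))(y) = S (φ·b) (x* y) + S (b·φ) (y x*)`, so with `a = x*` the hypothesis
reads `ψ([a,y]) = G (a y) + H (y a)`, where `G = ∑ S (φ_j·b_j)` and `H = ∑ S (b_j·φ_j)`.
Taking `a = 1` gives `H = -G`, whence `ψ([a,y]) = G ([a,y])`; finally `(φ·b)* = b*·φ*`. -/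

theorem apply_commutator_eq_sub_of_eq_add {R G : Type*} [NonAssocRing R] [AddGroup G]
    {f g h : R → G} (hf : f 0 = 0)
    (hsplit : ∀ a x, f (a * x - x * a) = g (a * x) + h (x * a)) (a x : R) :
    f (a * x - x * a) = g (a * x) - g (x * a) := by
  have sum_zero (y : R) : g y + h y = 0 := by simpa [hf] using (hsplit 1 y).symm
  rw [hsplit, sub_eq_add_neg, neg_eq_of_add_eq_zero_right (sum_zero (x * a))]

section StarRing

variable {R : Type*} [NormedRing R] [StarRing R]

/-- The skew-adjoint part `(φ - φ*) / 2` of a functional. On commutators, `ψ` turns out to be the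
sum of the skew parts of the `φ_j·b_j`. It is defined on arbitrary functions because `actL`, `actR`
and `fstar` are unbundled. -/
def skewPart (φ : R → ℂ) : R → ℂ := (2 : ℂ)⁻¹ • (φ - fstar φ)

theorem fstar_actR (φ : R → ℂ) (b : R) : fstar (actR φ b) = actL (star b) (fstar φ) := by
  funext x
  simp only [fstar, actR, actL, star_mul, star_star]

theorem skewPart_actR_sub (φ : R →+ ℂ) (b x y : R) :
    skewPart (actR φ b) (x - y) = skewPart (actR φ b) x - skewPart (actR φ b) y := by
  simp only [skewPart, Pi.smul_apply, Pi.sub_apply, fstar, actR, star_sub, mul_sub, map_sub,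
    smul_eq_mul]
  ring

variable [NormedAlgebra ℂ R]

theorem tOut_apply (φ : R →ₗ[ℂ] ℂ) (b x y : R) :
    tOut x b φ y = (2 : ℂ)⁻¹ * (actR φ b (star x * y) + actL b φ (y * star x)) := by
  simp only [tOut, tp, actR, actL, map_smul, map_add, smul_eq_mul, mul_assoc]

theorem tMid_apply (φ : R →ₗ[ℂ] ℂ) (b x y : R) :
    tMid b φ x y =
      (2 : ℂ)⁻¹ * (fstar (actR φ b) (star x * y) + fstar (actL b φ) (y * star x)) := by
  simp only [tMid, tp, fstar, actR, actL, map_smul, map_add, smul_eq_mul, map_mul, map_inv₀,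
    map_ofNat, star_mul, star_star, mul_assoc]

theorem tOut_sub_tMid_apply (φ : R →ₗ[ℂ] ℂ) (b x y : R) :
    (tOut x b φ - tMid b φ x) y =
      skewPart (actR φ b) (star x * y) + skewPart (actL b φ) (y * star x) := by
  simp only [Pi.sub_apply, tOut_apply, tMid_apply, skewPart, Pi.smul_apply, smul_eq_mul]
  ring

theorem commutator_value_of_exact_inner_general {ι : Type*} [Fintype ι] (ψ : R →ₗ[ℂ] ℂ)
    (φs : ι → R →ₗ[ℂ] ℂ) (bs : ι → R)
    (h : ∀ x : R, Dd ψ (star x) = ∑ j, (tOut x (bs j) (φs j) - tMid (bs j) (φs j) x))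
    (a x : R) :
    ψ (a * x - x * a) =
      (2 : ℂ)⁻¹ * (∑ j, (actR (φs j) (bs j) - actL (star (bs j)) (fstar (φs j))))
        (a * x - x * a) := by
  have split (a x : R) : ψ (a * x - x * a) =
      ∑ j, skewPart (actR (φs j) (bs j)) (a * x) + ∑ j, skewPart (actL (bs j) (φs j)) (x * a) := by
    simpa only [Dd, star_star, Finset.sum_apply, tOut_sub_tMid_apply, Finset.sum_add_distrib]
      using congrFun (h (star a)) x
  calc ψ (a * x - x * a)
      = ∑ j, skewPart (actR (φs j) (bs j)) (a * x) - ∑ j, skewPart (actR (φs j) (bs j)) (x * a) :=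
        apply_commutator_eq_sub_of_eq_add (g := fun z ↦ ∑ j, skewPart (actR (φs j) (bs j)) z)
          (h := fun z ↦ ∑ j, skewPart (actL (bs j) (φs j)) z) (map_zero ψ) split a x
    _ = ∑ j, skewPart (actR (φs j) (bs j)) (a * x - x * a) := by
        rw [← Finset.sum_sub_distrib]
        exact Finset.sum_congr rfl fun j _ ↦
          (skewPart_actR_sub (φs j).toAddMonoidHom (bs j) (a * x) (x * a)).symm
    _ = (2 : ℂ)⁻¹ * (∑ j, (actR (φs j) (bs j) - actL (star (bs j)) (fstar (φs j))))
          (a * x - x * a) := by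
        simp only [skewPart, fstar_actR, Pi.smul_apply, smul_eq_mul, Finset.sum_apply,
          Finset.mul_sum]

end StarRing

/-- If `D_ψ∘* = Σ_j (L(φ_j,b_j) - L(b_j,φ_j))` as maps from `A` to `A*`, then
`ψ([a,x]) = (1/2) Σ_j (φ_j·b_j - b_j*·φ_j*)([a,x])` for all `a, x ∈ A`. -/
theorem commutator_value_of_exact_inner (ψ : A →L[ℂ] ℂ) (n : ℕ)
    (φs : Fin n → (A →L[ℂ] ℂ)) (bs : Fin n → A)
    (h : ∀ x : A,
      Dd ⇑ψ (star x) = ∑ j, (tOut x (bs j) ⇑(φs j) - tMid (bs j) ⇑(φs j) x)) :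
    ∀ a x : A,
      ψ (a * x - x * a) =
        (2 : ℂ)⁻¹ *
          (∑ j, (actR ⇑(φs j) (bs j) - actL (star (bs j)) (fstar ⇑(φs j))))
            (a * x - x * a) :=
  commutator_value_of_exact_inner_general ψ.toLinearMap (fun j ↦ (φs j).toLinearMap) bs h
end
end
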